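/- For every natural number n ≥ 2, the number of positive integers k with 2^k + 1 ≤ n, plus one, equals ⌈log₂ n⌉ (the ceiling of the base-2 logarithm of n, i.e., Nat.clog 2 n). (Hence the online hash-chain growth algorithm, which creates a new pebble exactly when the total number of generated hash elements reaches 2^k + 1 for some k ≥ 1 and creates one final pebble for the seed when it halts, stores exactly ⌈log₂ n⌉ pebbles after generating n hash elements.) -/

import Mathlib

theorem setOf_pos_and_pow_lt_eq_Ioo_clog {b : ℕ} (hb : 1 < b) (n : ℕ) :
    {k : ℕ | 0 < k ∧ b ^ k < n} = Set.Ioo 0 (Nat.clog b n) :=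
  Set.ext fun _ => and_congr_right' (Nat.lt_clog_iff_pow_lt hb).symm

theorem ncard_setOf_pos_and_pow_lt {b : ℕ} (hb : 1 < b) (n : ℕ) :
    {k : ℕ | 0 < k ∧ b ^ k < n}.ncard = Nat.clog b n - 1 := by
  rw [setOf_pos_and_pow_lt_eq_Ioo_clog hb, Set.ncard_Ioo_nat, Nat.sub_zero]

theorem stmt_12_general {b n : ℕ} (hb : 1 < b) (hn : 2 ≤ n) :
    {k : ℕ | 0 < k ∧ b ^ k + 1 ≤ n}.ncard + 1 = Nat.clog b n := by
  have clog_pos : 0 < Nat.clog b n := Nat.clog_pos hb hn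
  simp only [Nat.add_one_le_iff]
  rw [ncard_setOf_pos_and_pow_lt hb, Nat.sub_add_cancel clog_pos]

/-- The online hash-chain growth algorithm stores exactly `⌈log₂ n⌉` pebbles
after generating `n ≥ 2` hash elements: the number of positive integers `k`
with `2^k + 1 ≤ n`, plus one (for the seed pebble), equals `Nat.clog 2 n`. -/
theorem stmt_12 (n : ℕ) (hn : 2 ≤ n) :
    {k : ℕ | 0 < k ∧ 2 ^ k + 1 ≤ n}.ncard + 1 = Nat.clog 2 n :=
  stmt_12_general one_lt_two hn
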